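/- Let k ≥ 1 be an integer divisible by 3, and take n = 2, so R = ℂ[z][x₀, x₁, x₂] with derivation D(x₀) = x₁, D(x₁) = x₂, D(x₂) = z·x₀. Define θ : P_k → P_k by θ(f) = z·∂f/∂z + D(f). Then θ is injective and its cokernel is a finite-dimensional ℂ-vector space of dimension k(k+3)/6. -/

import Mathlib

/-!
Give `z` the weight `3` and `xᵢ` the weight `i`, and write `θ = E + D` with `E = z ∂/∂z`. Then `E`
has degree `0` and `D` has degree `1`, so `D` is the leading part of `θ` for the filtration of `P_k`
by weight.

Let `k = 3 m` with `m > 0`. Setting `z = 1` turns `D` into the cyclic shift of `x₀, x₁, x₂`, which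
a discrete Fourier transform diagonalizes: with eigenvectors `y₀, y₁, y₂` for `1, ζ, ζ²`, the only
monomial of degree `k` in the kernel is `(y₀ y₁ y₂)^m`. Hence the kernel of `D` on `P_k` is spanned
in each weight by some `z^j N^m`, where `N` is the norm of `x₂ + t x₁ + t² x₀`, `t³ = z`. Since
`E N - N` lies in the image of `D`, so does `E (z^j N^m) - (j + m) z^j N^m`, whereas `z^j N^m` does
not, because the coefficient of `(y₀ y₁ y₂)^m` vanishes on the image of `D`. So if the top component
of `f` is killed by `D`, then its image under `E` cannot be cancelled by the lower components, and
`θ f` never has smaller weight than `f`; in particular `θ` is injective. Moreover the weight of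
`z^j N^m` is divisible by `3`, so `θ` raises weights not divisible by `3` by exactly one.

Let `F n` be the part of `P_k` of weight less than `n`. For `3 ∤ n` we get `θ⁻¹ (F (n + 1)) = F n`,
so the image of `F (n + 1)` in the cokernel has dimension `dim F (n + 1) - dim F n`, the number of
monomials of weight exactly `n`. For large `n ≡ 1` modulo `3` it equals `k (k + 3) / 6`.
-/

open MvPolynomial

/-- We model `R = ℂ[z][x₀, x₁, x₂]` as `MvPolynomial (Fin 4) ℂ`, the variable of index `0`
playing the role of `z` and the variable of index `i+1` playing the role of `x_i`.  These
are the values on the variables of the derivation `D` with `D(z) = 0` (so `D` is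
`ℂ[z]`-linear), `D(x₀) = x₁`, `D(x₁) = x₂`, `D(x₂) = z·x₀`. -/
noncomputable def kloostermanDvals₃ : Fin 4 → MvPolynomial (Fin 4) ℂ :=
  ![0, MvPolynomial.X 2, MvPolynomial.X 3, MvPolynomial.X 0 * MvPolynomial.X 1]

/-- The operator `θ(f) = z·∂f/∂z + D(f)`. -/
noncomputable def kloostermanTheta₃ : MvPolynomial (Fin 4) ℂ →ₗ[ℂ] MvPolynomial (Fin 4) ℂ :=
  LinearMap.mulLeft ℂ (MvPolynomial.X 0) ∘ₗ (MvPolynomial.pderiv 0).toLinearMap +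
    (MvPolynomial.mkDerivation ℂ kloostermanDvals₃).toLinearMap

/-- `P_k`: polynomials homogeneous of total degree `k` in `x₀, x₁, x₂` (the variable `z`
carrying weight `0`). -/
noncomputable def kloostermanPk₃ (k : ℕ) : Submodule ℂ (MvPolynomial (Fin 4) ℂ) :=
  MvPolynomial.weightedHomogeneousSubmodule ℂ (fun j => if (j : ℕ) = 0 then 0 else 1) k

section DerivationsAndWeights

variable {R σ τ : Type*} [CommSemiring R]

theorem algHom_derivation_comm (φ : MvPolynomial σ R →ₐ[R] MvPolynomial τ R)
    {δ : Derivation R (MvPolynomial σ R) (MvPolynomial σ R)}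
    {ε : Derivation R (MvPolynomial τ R) (MvPolynomial τ R)}
    (h : ∀ i, φ (δ (X i)) = ε (φ (X i))) (f : MvPolynomial σ R) : φ (δ f) = ε (φ f) := by
  induction f using MvPolynomial.induction_on with
  | C a => rw [derivation_C, map_zero, ← algebraMap_eq, φ.commutes, ε.map_algebraMap]
  | add p q hp hq => simp only [map_add, hp, hq]
  | mul_X p i hp => simp only [Derivation.leibniz, smul_eq_mul, map_add, map_mul, hp, h]

theorem derivation_monomial {A : Type*} [AddCommMonoid A] [Module R A]
    [Module (MvPolynomial σ R) A] [IsScalarTower R (MvPolynomial σ R) A]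
    (δ : Derivation R (MvPolynomial σ R) A) (s : σ →₀ ℕ) (a : R) :
    δ (monomial s a) =
      a • s.sum fun i n => monomial (s - Finsupp.single i 1) (n : R) • δ (X i) := by
  rw [← mkDerivation_monomial]
  exact DFunLike.congr_fun (derivation_ext fun i => (mkDerivation_X R (fun i => δ (X i)) i).symm) _

theorem coeff_derivation_of_diagonal {δ : Derivation R (MvPolynomial σ R) (MvPolynomial σ R)}
    {μ : σ → R} (hδ : ∀ i, δ (X i) = C (μ i) * X i) (f : MvPolynomial σ R) (s : σ →₀ ℕ) :
    coeff s (δ f) = (s.sum fun i n => n * μ i) * coeff s f := by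
  classical
  induction f using MvPolynomial.induction_on' with
  | add p q hp hq => simp only [map_add, coeff_add, hp, hq, mul_add]
  | monomial t a =>
    have eigenvector : δ (monomial t a) = monomial t ((t.sum fun i n => n * μ i) * a) := by
      rw [derivation_monomial, Finsupp.sum, Finset.smul_sum, Finsupp.sum, Finset.sum_mul,
        map_sum]
      refine Finset.sum_congr rfl fun i hi => ?_
      rw [hδ, smul_eq_mul, mul_left_comm, X, monomial_mul, C_mul_monomial, smul_monomial,
        Finsupp.sub_add_single_one_cancel (Finsupp.mem_support_iff.1 hi)]
      congr 1
      simp only [smul_eq_mul]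
      ring
    rw [eigenvector, coeff_monomial, coeff_monomial]
    split_ifs with hts
    · rw [hts]
    · rw [mul_zero]

theorem isWeightedHomogeneous_aeval {M : Type*} [AddCommMonoid M] {w : σ → M} {w' : τ → M}
    {n : M} {f : MvPolynomial σ R} (hf : IsWeightedHomogeneous w f n)
    {g : σ → MvPolynomial τ R} (hg : ∀ i, IsWeightedHomogeneous w' (g i) (w i)) :
    IsWeightedHomogeneous w' (aeval g f) n := by
  induction hf using IsWeightedHomogeneous.induction_on with
  | zero => simpa only [map_zero] using isWeightedHomogeneous_zero R w' n
  | add p q _ _ hp hq => simpa only [map_add] using hp.add hq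
  | monomial s a hs =>
    rw [aeval_monomial, algebraMap_eq, ← hs, Finsupp.weight_apply]
    exact (IsWeightedHomogeneous.prod _ _ _ fun i _ => (hg i).pow (s i)).C_mul a

theorem eval_pow_weight_mul {w : σ → ℕ} {n : ℕ} {f : MvPolynomial σ R}
    (hf : IsWeightedHomogeneous w f n) (t : R) (p : σ → R) :
    eval (fun i => t ^ w i * p i) f = t ^ n * eval p f := by
  induction hf using IsWeightedHomogeneous.induction_on with
  | zero => simp only [map_zero, mul_zero]
  | add p q _ _ hp hq => simp only [map_add, mul_add, hp, hq]
  | monomial s a hs =>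
    simp only [eval_monomial, Finsupp.prod, mul_pow, Finset.prod_mul_distrib, ← pow_mul,
      Finset.prod_pow_eq_pow_sum, ← hs, Finsupp.weight_apply, Finsupp.sum, smul_eq_mul,
      mul_comm (w _)]
    ring

theorem eq_zero_of_eval_eq_zero_of_apply_eq_one {K : Type*} [Field K] [IsAlgClosed K]
    {w : σ → ℕ} {n : ℕ} {f : MvPolynomial σ K} (hf : IsWeightedHomogeneous w f n) {i : σ}
    (hi : w i ≠ 0) (h : ∀ p : σ → K, p i = 1 → eval p f = 0) : f = 0 := by
  classical
  have X_mul_eq_zero : X i * f = 0 := by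
    refine MvPolynomial.funext fun p => ?_
    rw [map_mul, eval_X, map_zero]
    obtain hp | hp := eq_or_ne (p i) 0
    · rw [hp, zero_mul]
    obtain ⟨t, ht⟩ := IsAlgClosed.exists_pow_nat_eq (p i) (Nat.pos_of_ne_zero hi)
    have ht0 : t ≠ 0 := by
      rintro rfl
      exact hp (by rw [← ht, zero_pow hi])
    have rescaled : p = fun j => t ^ w j * (p j / t ^ w j) :=
      _root_.funext fun j => (mul_div_cancel₀ _ (pow_ne_zero _ ht0)).symm
    rw [rescaled, eval_pow_weight_mul hf, h _ (by rw [ht, div_self hp]), mul_zero, mul_zero]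
  exact (mul_eq_zero.1 X_mul_eq_zero).resolve_left (X_ne_zero i)

/-- A linear endomorphism which is homogeneous of degree `e` for the grading by the weight `w`. -/
def RaisesWeight (w : σ → ℕ) (e : ℕ) (L : MvPolynomial σ R →ₗ[R] MvPolynomial σ R) : Prop :=
  ∀ ⦃n : ℕ⦄ ⦃f : MvPolynomial σ R⦄,
    IsWeightedHomogeneous w f n → IsWeightedHomogeneous w (L f) (n + e)

theorem raisesWeight_derivation {w : σ → ℕ} {e : ℕ}
    {δ : Derivation R (MvPolynomial σ R) (MvPolynomial σ R)}
    (hδ : ∀ i, IsWeightedHomogeneous w (δ (X i)) (w i + e)) :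
    RaisesWeight w e δ.toLinearMap := by
  intro n f hf
  induction hf using IsWeightedHomogeneous.induction_on with
  | zero => simpa only [map_zero] using isWeightedHomogeneous_zero R w _
  | add p q _ _ hp hq => simpa only [map_add] using hp.add hq
  | monomial s a hs =>
    rw [Derivation.coeFn_coe, derivation_monomial, smul_eq_C_mul]
    refine .C_mul (.sum _ _ _ fun i hi => ?_) a
    have := (isWeightedHomogeneous_monomial w (s - Finsupp.single i 1) (s i : R) rfl).mul (hδ i)
    rwa [← add_assoc, Finsupp.weight_sub_single_add (Finsupp.mem_support_iff.1 hi), hs] at this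

namespace RaisesWeight

variable {w : σ → ℕ} {e : ℕ} {L : MvPolynomial σ R →ₗ[R] MvPolynomial σ R}

theorem weightedHomogeneousComponent_add (hL : RaisesWeight w e L) (f : MvPolynomial σ R)
    (n : ℕ) :
    weightedHomogeneousComponent w (n + e) (L f) = L (weightedHomogeneousComponent w n f) := by
  induction f using MvPolynomial.induction_on' with
  | add p q hp hq => simp only [map_add, hp, hq]
  | monomial s a =>
    have hs : IsWeightedHomogeneous w (monomial s a) (Finsupp.weight w s) :=
      isWeightedHomogeneous_monomial w s a rfl
    rw [weightedHomogeneousComponent_of_mem hs, weightedHomogeneousComponent_of_mem (hL hs),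
      apply_ite L, map_zero]
    simp only [add_left_inj]

theorem exists_weightedHomogeneousComponent_eq (hL : RaisesWeight w e L)
    (f : MvPolynomial σ R) (n : ℕ) : ∃ g, weightedHomogeneousComponent w n (L f) = L g := by
  induction f using MvPolynomial.induction_on' with
  | add p q hp hq =>
    obtain ⟨gp, hgp⟩ := hp
    obtain ⟨gq, hgq⟩ := hq
    exact ⟨gp + gq, by simp only [map_add, hgp, hgq]⟩
  | monomial s a =>
    have hs := hL (isWeightedHomogeneous_monomial w s a rfl)
    rw [weightedHomogeneousComponent_of_mem hs]
    split_ifs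
    · exact ⟨_, rfl⟩
    · exact ⟨0, (map_zero L).symm⟩

end RaisesWeight

theorem isWeightedHomogeneous_weightedHomogeneousComponent
    {w w' : σ → ℕ} {k : ℕ} {f : MvPolynomial σ R} (hf : IsWeightedHomogeneous w' f k) (n : ℕ) :
    IsWeightedHomogeneous w' (weightedHomogeneousComponent w n f) k := by
  classical
  intro s hs
  rw [coeff_weightedHomogeneousComponent] at hs
  exact hf (ite_ne_right_iff.1 hs).2

end DerivationsAndWeights

section CubeRootsOfUnity

theorem one_add_add_sq_eq_zero {K : Type*} [CommRing K] [IsDomain K] {ζ : K}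
    (hζ : IsPrimitiveRoot ζ 3) : 1 + ζ + ζ ^ 2 = 0 := by
  simpa [Finset.sum_range_succ] using hζ.geom_sum_eq_zero (by norm_num)

theorem add_mul_add_sq_mul_eq_zero_iff {K : Type*} [Field K] [CharZero K] {ζ : K}
    (hζ : IsPrimitiveRoot ζ 3) {a b c : ℕ} :
    (a : K) + ζ * b + ζ ^ 2 * c = 0 ↔ a = b ∧ b = c := by
  have hsum := one_add_add_sq_eq_zero hζ
  constructor
  · intro h
    -- Multiplying by the conjugate gives the norm form of `ℤ[ζ]`, which is positive definite.
    have norm_eq_zero : ((a : ℤ) - c) ^ 2 - (a - c) * (b - c) + ((b : ℤ) - c) ^ 2 = 0 := by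
      have : ((a : K) - c) ^ 2 - (a - c) * (b - c) + ((b : K) - c) ^ 2 = 0 := by
        linear_combination ((a : K) - c + (-1 - ζ) * (b - c)) * (h - c * hsum) +
          ((b : K) - c) ^ 2 * hsum
      exact_mod_cast this
    constructor <;> zify <;> nlinarith [sq_nonneg ((a : ℤ) - b), sq_nonneg ((b : ℤ) - c)]
  · rintro ⟨rfl, rfl⟩
    linear_combination (a : K) * hsum

end CubeRootsOfUnity

section WeightFiltration

variable {R σ : Type*} [CommSemiring R]

variable (R) in
/-- The filtration of the polynomial ring attached to a weight: polynomials all of whose monomials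
have weight less than `n`. -/
noncomputable def weightLT (w : σ → ℕ) (n : ℕ) : Submodule R (MvPolynomial σ R) :=
  restrictSupport R {s | Finsupp.weight w s < n}

theorem mem_weightLT_iff {w : σ → ℕ} {n : ℕ} {f : MvPolynomial σ R} :
    f ∈ weightLT R w n ↔ ∀ v, n ≤ v → weightedHomogeneousComponent w v f = 0 := by
  classical
  rw [weightLT, mem_restrictSupport_iff]
  constructor
  · intro hf v hv
    refine weightedHomogeneousComponent_eq_zero' v f fun s hs => ?_
    exact ((hf hs).trans_le hv).ne
  · intro hf s hs
    by_contra hlt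
    have := congrArg (coeff s) (hf _ (not_lt.1 hlt))
    rw [coeff_weightedHomogeneousComponent, if_pos rfl, coeff_zero] at this
    exact mem_support_iff.1 hs this

theorem weightLT_mono (w : σ → ℕ) : Monotone (weightLT R w) :=
  fun _ _ hmn => restrictSupport_mono R fun _ hs => lt_of_lt_of_le hs hmn

theorem weightLT_zero (w : σ → ℕ) : weightLT R w 0 = ⊥ := by
  simp [weightLT, restrictSupport_eq_span]

theorem exists_mem_weightLT (w : σ → ℕ) (f : MvPolynomial σ R) : ∃ n, f ∈ weightLT R w n :=
  ⟨weightedTotalDegree w f + 1, fun _ hs => Nat.lt_succ_of_le (le_weightedTotalDegree w hs)⟩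

theorem mem_weightLT_of_mem_succ {w : σ → ℕ} {n : ℕ} {f : MvPolynomial σ R}
    (hf : f ∈ weightLT R w (n + 1)) (hn : weightedHomogeneousComponent w n f = 0) :
    f ∈ weightLT R w n := by
  rw [mem_weightLT_iff] at hf ⊢
  intro v hv
  obtain rfl | hlt := hv.eq_or_lt
  · exact hn
  · exact hf v hlt

section Finite

variable {w w' : σ → ℕ}

/-- The monomial basis of the `n`-th step of the filtration by `w` of the homogeneous polynomials of
weight `k` for a second weight `w'`. -/
noncomputable def weightLTBasis (w w' : σ → ℕ) (k n : ℕ) :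
    Module.Basis {s : σ →₀ ℕ | Finsupp.weight w' s = k ∧ Finsupp.weight w s < n} R
      ((weightLT R w n).submoduleOf (weightedHomogeneousSubmodule R w' k)) :=
  (basisRestrictSupport R _).map <|
    (LinearEquiv.ofEq _ _ <| by
      rw [Submodule.submoduleOf, Submodule.map_comap_subtype,
        weightedHomogeneousSubmodule_eq_finsupp_supported]
      exact SetLike.ext fun f => Set.subset_inter_iff).trans
    (Submodule.equivSubtypeMap _ _).symm

theorem finite_setOf_weight_eq_and_weight_lt [Finite σ] (hw : ∀ i, w i + w' i ≠ 0) (k n : ℕ) :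
    {s : σ →₀ ℕ | Finsupp.weight w' s = k ∧ Finsupp.weight w s < n}.Finite := by
  refine (Finsupp.finite_of_nat_weight_lt (fun i => w i + w' i) hw (n + k)).subset ?_
  rintro s ⟨hk, hn⟩
  have weight_add : Finsupp.weight (fun i => w i + w' i) s =
      Finsupp.weight w s + Finsupp.weight w' s := by
    simp only [Finsupp.weight_apply, smul_add, Finsupp.sum_add]
  rw [Set.mem_ofPred_eq, weight_add, hk]
  exact Nat.add_lt_add_right hn k

theorem finite_weightLT_submoduleOf [Finite σ] (hw : ∀ i, w i + w' i ≠ 0) (k n : ℕ) :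
    Module.Finite R ((weightLT R w n).submoduleOf (weightedHomogeneousSubmodule R w' k)) :=
  have := (finite_setOf_weight_eq_and_weight_lt hw k n).to_subtype
  .of_basis (weightLTBasis w w' k n)

theorem finrank_weightLT_submoduleOf_succ [Finite σ] [StrongRankCondition R]
    (hw : ∀ i, w i + w' i ≠ 0) (k n : ℕ) :
    Module.finrank R ((weightLT R w (n + 1)).submoduleOf (weightedHomogeneousSubmodule R w' k)) =
      Module.finrank R ((weightLT R w n).submoduleOf (weightedHomogeneousSubmodule R w' k)) +
        {s : σ →₀ ℕ | Finsupp.weight w' s = k ∧ Finsupp.weight w s = n}.ncard := by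
  have hfin := finite_setOf_weight_eq_and_weight_lt hw k
  have split : {s : σ →₀ ℕ | Finsupp.weight w' s = k ∧ Finsupp.weight w s < n + 1} =
      {s | Finsupp.weight w' s = k ∧ Finsupp.weight w s < n} ∪
        {s | Finsupp.weight w' s = k ∧ Finsupp.weight w s = n} := by
    ext s
    simp only [Set.mem_ofPred_eq, Set.mem_union, Nat.lt_succ_iff_lt_or_eq, and_or_left]
  rw [Module.finrank_eq_nat_card_basis (weightLTBasis w w' k (n + 1)),
    Module.finrank_eq_nat_card_basis (weightLTBasis w w' k n), Nat.card_coe_set_eq,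
    Nat.card_coe_set_eq, split]
  refine Set.ncard_union_eq (Set.disjoint_left.2 fun s hlt heq => hlt.2.ne heq.2) (hfin n) ?_
  exact (hfin (n + 1)).subset fun s hs => ⟨hs.1, Nat.lt_succ_of_le hs.2.le⟩

end Finite

end WeightFiltration

section LeadingTerms

variable {R σ : Type*} [CommRing R] {w : σ → ℕ} {E D : MvPolynomial σ R →ₗ[R] MvPolynomial σ R}
  {P : Submodule R (MvPolynomial σ R)} {n : ℕ} {f : MvPolynomial σ R}

theorem apply_component_eq_zero_of_mem_weightLT_succ (hE : RaisesWeight w 0 E)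
    (hD : RaisesWeight w 1 D) (hf : f ∈ weightLT R w (n + 1))
    (hθ : (E + D) f ∈ weightLT R w (n + 1)) : D (weightedHomogeneousComponent w n f) = 0 := by
  have top := mem_weightLT_iff.1 hθ (n + 1) le_rfl
  have hfE := hE.weightedHomogeneousComponent_add f (n + 1)
  rw [add_zero, mem_weightLT_iff.1 hf (n + 1) le_rfl, map_zero] at hfE
  rwa [LinearMap.add_apply, map_add, hfE, zero_add, hD.weightedHomogeneousComponent_add] at top

theorem add_apply_mem_weightLT_succ (hE : RaisesWeight w 0 E) (hD : RaisesWeight w 1 D)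
    (hf : f ∈ weightLT R w n) : (E + D) f ∈ weightLT R w (n + 1) := by
  rw [mem_weightLT_iff] at hf ⊢
  intro v hv
  obtain ⟨v, rfl⟩ := Nat.exists_eq_add_of_le' (Nat.one_le_of_lt hv)
  have hfE := hE.weightedHomogeneousComponent_add f (v + 1)
  rw [add_zero, hf (v + 1) (by lia), map_zero] at hfE
  rw [LinearMap.add_apply, map_add, hfE, hD.weightedHomogeneousComponent_add, hf v (by lia),
    map_zero, add_zero]

theorem mem_weightLT_of_add_apply_mem (hE : RaisesWeight w 0 E) (hD : RaisesWeight w 1 D)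
    (hP : ∀ f ∈ P, ∀ v, weightedHomogeneousComponent w v f ∈ P)
    (hED : ∀ v, ∀ f ∈ P, IsWeightedHomogeneous w f v → D f = 0 → ∀ g, E f = D g → f = 0)
    (hf : f ∈ P) (hθ : (E + D) f ∈ weightLT R w n) : f ∈ weightLT R w n := by
  obtain ⟨N, hN⟩ := exists_mem_weightLT w f
  have descent : ∀ i, f ∈ weightLT R w (n + i) → f ∈ weightLT R w n := by
    intro i
    induction i with
    | zero => exact id
    | succ i ih =>
      intro hi
      refine ih (mem_weightLT_of_mem_succ hi ?_)
      obtain ⟨g, hg⟩ := hD.exists_weightedHomogeneousComponent_eq f (n + i)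
      have hθi := mem_weightLT_iff.1 hθ (n + i) (Nat.le_add_right n i)
      rw [LinearMap.add_apply, map_add, hg] at hθi
      refine hED (n + i) _ (hP f hf _) (weightedHomogeneousComponent_isWeightedHomogeneous _ _)
        (apply_component_eq_zero_of_mem_weightLT_succ hE hD hi (weightLT_mono w (by lia) hθ))
        (-g) ?_
      rw [map_neg, ← hE.weightedHomogeneousComponent_add f (n + i)]
      exact eq_neg_of_add_eq_zero_left hθi
  exact descent N (weightLT_mono w (Nat.le_add_left N n) hN)

end LeadingTerms

section Cokernel

open Filter

variable {K V : Type*} [Field K] [AddCommGroup V] [Module K V]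

theorem finrank_map_mkQ_range_add {θ : V →ₗ[K] V} (hθ : Function.Injective θ)
    (A : Submodule K V) [FiniteDimensional K A] :
    Module.finrank K (A.map (LinearMap.range θ).mkQ) + Module.finrank K (A.comap θ) =
      Module.finrank K A := by
  have finrank_ker :
      Module.finrank K (LinearMap.ker ((LinearMap.range θ).mkQ.domRestrict A)) =
        Module.finrank K (A.comap θ) := by
    rw [LinearMap.ker_domRestrict, Submodule.ker_mkQ, ← Submodule.finrank_map_subtype_eq,
      Submodule.map_comap_subtype, inf_comm, ← Submodule.map_comap_eq,
      ← (Submodule.equivMapOfInjective θ hθ _).finrank_eq]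
  rw [← finrank_ker, ← LinearMap.range_domRestrict, LinearMap.finrank_range_add_finrank_ker]

theorem finrank_quotient_range_of_filtration {θ : V →ₗ[K] V} (hθ : Function.Injective θ)
    {F : ℕ → Submodule K V} [∀ n, FiniteDimensional K (F n)] (hF : Monotone F)
    (hexh : ∀ x, ∃ n, x ∈ F n) {d : ℕ}
    (hstrict : ∃ᶠ n in atTop, (F (n + 1)).comap θ = F n ∧
      Module.finrank K (F (n + 1)) = Module.finrank K (F n) + d) :
    FiniteDimensional K (V ⧸ LinearMap.range θ) ∧
      Module.finrank K (V ⧸ LinearMap.range θ) = d := by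
  let Q := fun n => (F n).map (LinearMap.range θ).mkQ
  have hQ : Monotone Q := fun m n hmn => Submodule.map_mono (hF hmn)
  have frequently_finrank : ∃ᶠ n in atTop, Module.finrank K (Q (n + 1)) = d := by
    refine hstrict.mono fun n ⟨hcomap, hfinrank⟩ => ?_
    have := finrank_map_mkQ_range_add hθ (F (n + 1))
    rw [hcomap, hfinrank, add_comm] at this
    exact Nat.add_left_cancel this
  obtain ⟨n₀, hn₀⟩ := frequently_finrank.exists
  have Q_eq_top : Q (n₀ + 1) = ⊤ := by
    refine Submodule.eq_top_iff'.2 fun q => ?_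
    obtain ⟨x, rfl⟩ := Submodule.mkQ_surjective _ q
    obtain ⟨m, hm⟩ := hexh x
    obtain ⟨n, hn, hdim⟩ := frequently_atTop.1 frequently_finrank (max n₀ m)
    have stable : Q (n₀ + 1) = Q (n + 1) :=
      Submodule.eq_of_le_of_finrank_eq (hQ (by lia)) (hn₀.trans hdim.symm)
    rw [stable]
    exact Submodule.mem_map_of_mem (hF (by lia) hm)
  constructor
  · exact Module.finite_def.2 (Q_eq_top ▸ (Module.Finite.iff_fg.1 inferInstance).map _)
  · rw [← hn₀, Q_eq_top, finrank_top]

end Cokernel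

namespace Kloosterman

/-- The weight for which `kloostermanPk₃ k` is the space of homogeneous polynomials of weight `k`:
the total degree in `x₀, x₁, x₂`. -/
abbrev xDegree : Fin 4 → ℕ := fun j => if (j : ℕ) = 0 then 0 else 1

/-- The weight giving `z, x₀, x₁, x₂` the values `3, 0, 1, 2`. It makes `D` homogeneous of degree
one, as `x₂ ↦ z x₀` has to raise the weight from `2` to `3`. -/
def cyclicWeight : Fin 4 → ℕ := ![3, 0, 1, 2]

/-- The `ℂ[z]`-linear part `D` of `θ`. -/
noncomputable def D : Derivation ℂ (MvPolynomial (Fin 4) ℂ) (MvPolynomial (Fin 4) ℂ) :=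
  mkDerivation ℂ kloostermanDvals₃

/-- The Euler operator `z ∂/∂z`. -/
noncomputable def E : Derivation ℂ (MvPolynomial (Fin 4) ℂ) (MvPolynomial (Fin 4) ℂ) :=
  (X 0 : MvPolynomial (Fin 4) ℂ) • pderiv 0

theorem theta_eq : kloostermanTheta₃ = E.toLinearMap + D.toLinearMap := rfl

theorem D_X (i : Fin 4) : D (X i) = kloostermanDvals₃ i := mkDerivation_X ..

theorem D_X_zero : D (X 0) = 0 := D_X 0

theorem D_X_one : D (X 1) = X 2 := D_X 1

theorem D_X_two : D (X 2) = X 3 := D_X 2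

theorem D_X_three : D (X 3) = X 0 * X 1 := D_X 3

theorem E_X_zero : E (X 0) = X 0 := by
  rw [E, Derivation.smul_apply, pderiv_X_self, smul_eq_mul, mul_one]

theorem E_X_of_ne {i : Fin 4} (hi : i ≠ 0) : E (X i) = 0 := by
  rw [E, Derivation.smul_apply, pderiv_X_of_ne hi, smul_zero]

theorem weight_xDegree (s : Fin 4 →₀ ℕ) : Finsupp.weight xDegree s = s 1 + s 2 + s 3 := by
  simp [Finsupp.weight_eq_sum, Fin.sum_univ_four, xDegree]

theorem weight_cyclicWeight (s : Fin 4 →₀ ℕ) :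
    Finsupp.weight cyclicWeight s = 3 * s 0 + s 2 + 2 * s 3 := by
  simp [Finsupp.weight_eq_sum, Fin.sum_univ_four, cyclicWeight, mul_comm]

theorem raisesWeight_D {w : Fin 4 → ℕ} {e : ℕ} (h₁ : w 2 = w 1 + e) (h₂ : w 3 = w 2 + e)
    (h₃ : w 0 + w 1 = w 3 + e) : RaisesWeight w e D.toLinearMap := by
  refine raisesWeight_derivation fun i => ?_
  rw [D_X]
  fin_cases i
  · exact isWeightedHomogeneous_zero ..
  · exact h₁ ▸ isWeightedHomogeneous_X ..
  · exact h₂ ▸ isWeightedHomogeneous_X ..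
  · exact h₃ ▸ (isWeightedHomogeneous_X ..).mul (isWeightedHomogeneous_X ..)

theorem raisesWeight_E (w : Fin 4 → ℕ) : RaisesWeight w 0 E.toLinearMap := by
  refine raisesWeight_derivation fun i => ?_
  obtain rfl | hi := eq_or_ne i 0
  · rw [E_X_zero]
    exact isWeightedHomogeneous_X ..
  · rw [E_X_of_ne hi]
    exact isWeightedHomogeneous_zero ..

theorem theta_mem {k : ℕ} {f : MvPolynomial (Fin 4) ℂ} (hf : f ∈ kloostermanPk₃ k) :
    kloostermanTheta₃ f ∈ kloostermanPk₃ k := by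
  rw [theta_eq]
  exact add_mem (raisesWeight_E xDegree hf) (raisesWeight_D (e := 0) rfl rfl rfl hf)

/-- The operator `θ` on `P_k`. -/
noncomputable def thetaOn (k : ℕ) : kloostermanPk₃ k →ₗ[ℂ] kloostermanPk₃ k :=
  kloostermanTheta₃.restrict fun _ => theta_mem

theorem range_thetaOn (k : ℕ) : LinearMap.range (thetaOn k) =
    (Submodule.map kloostermanTheta₃ (kloostermanPk₃ k)).comap (kloostermanPk₃ k).subtype :=
  LinearMap.range_restrict ..

section Diagonalization

/-- Specialization at `z = 1` followed by the discrete Fourier transform: the variables of the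
target are eigenvectors of the cyclic shift `x₀ ↦ x₁ ↦ x₂ ↦ x₀` with eigenvalues `1, ζ, ζ²`. -/
noncomputable def diagonalize (ζ : ℂ) : MvPolynomial (Fin 4) ℂ →ₐ[ℂ] MvPolynomial (Fin 3) ℂ :=
  aeval (Fin.cons 1 fun i : Fin 3 => ∑ j : Fin 3, C (ζ ^ (i * j : ℕ)) * X j)

/-- The diagonal form of `D` at `z = 1`. -/
noncomputable def diagonalD (ζ : ℂ) :
    Derivation ℂ (MvPolynomial (Fin 3) ℂ) (MvPolynomial (Fin 3) ℂ) :=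
  mkDerivation ℂ fun i => C (ζ ^ (i : ℕ)) * X i

/-- The linear form extracting, after diagonalization, the coefficient of the only monomial of
degree `3 m` killed by `diagonalD`. It vanishes on the image of `D`. -/
noncomputable def invariantCoeff (ζ : ℂ) (m : ℕ) : MvPolynomial (Fin 4) ℂ →ₗ[ℂ] ℂ :=
  lcoeff ℂ (Finsupp.equivFunOnFinite.symm fun _ => m) ∘ₗ (diagonalize ζ).toLinearMap

variable {ζ : ℂ} {m v : ℕ} {f : MvPolynomial (Fin 4) ℂ}

theorem diagonalD_X (i : Fin 3) : diagonalD ζ (X i) = C (ζ ^ (i : ℕ)) * X i :=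
  mkDerivation_X ..

theorem coeff_diagonalD (s : Fin 3 →₀ ℕ) (p : MvPolynomial (Fin 3) ℂ) :
    coeff s (diagonalD ζ p) = (s 0 + ζ * s 1 + ζ ^ 2 * s 2) * coeff s p := by
  rw [coeff_derivation_of_diagonal diagonalD_X, Finsupp.sum_fintype _ _ (by simp),
    Fin.sum_univ_three]
  simp [mul_comm]

theorem diagonalize_X_zero : diagonalize ζ (X 0) = 1 := aeval_X ..

theorem diagonalize_X_succ (i : Fin 3) :
    diagonalize ζ (X i.succ) = ∑ j : Fin 3, C (ζ ^ (i * j : ℕ)) * X j := aeval_X ..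

theorem diagonalD_diagonalize_X_succ (i : Fin 3) :
    diagonalD ζ (diagonalize ζ (X i.succ)) = ∑ j : Fin 3, C (ζ ^ ((i + 1) * j : ℕ)) * X j := by
  rw [diagonalize_X_succ, map_sum]
  refine Finset.sum_congr rfl fun j _ => ?_
  rw [← smul_eq_C_mul, Derivation.map_smul, diagonalD_X, smul_eq_C_mul, ← mul_assoc, ← C_mul,
    ← pow_add, add_one_mul]

theorem eval_diagonalize (p : Fin 3 → ℂ) (f : MvPolynomial (Fin 4) ℂ) :
    eval p (diagonalize ζ f) =
      eval (Fin.cons 1 fun i : Fin 3 => ∑ j : Fin 3, ζ ^ (i * j : ℕ) * p j) f := by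
  rw [← aeval_eq_eval, diagonalize, comp_aeval_apply, ← aeval_eq_eval]
  congr 2
  funext i
  cases i using Fin.cases with
  | zero => exact map_one _
  | succ i => simp only [Fin.cons_succ, map_sum, map_mul, aeval_eq_eval, eval_C, eval_X]

theorem isWeightedHomogeneous_diagonalize (hf : IsWeightedHomogeneous xDegree f m) :
    IsWeightedHomogeneous (1 : Fin 3 → ℕ) (diagonalize ζ f) m := by
  refine isWeightedHomogeneous_aeval hf fun i => ?_
  cases i using Fin.cases with
  | zero => exact isWeightedHomogeneous_one ..
  | succ i => exact .sum _ _ _ fun j _ => (isWeightedHomogeneous_X ..).C_mul _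

variable (hζ : IsPrimitiveRoot ζ 3)
include hζ

theorem diagonalize_D (f : MvPolynomial (Fin 4) ℂ) :
    diagonalize ζ (D f) = diagonalD ζ (diagonalize ζ f) := by
  refine algHom_derivation_comm _ (fun i => ?_) f
  cases i using Fin.cases with
  | zero => rw [D_X_zero, map_zero, diagonalize_X_zero, Derivation.map_one_eq_zero]
  | succ i =>
    rw [diagonalD_diagonalize_X_succ]
    fin_cases i
    · exact (congrArg _ D_X_one).trans (diagonalize_X_succ 1)
    · exact (congrArg _ D_X_two).trans (diagonalize_X_succ 2)
    · refine (congrArg _ D_X_three).trans ?_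
      rw [map_mul, diagonalize_X_zero, one_mul]
      refine (diagonalize_X_succ 0).trans (Finset.sum_congr rfl fun j _ => ?_)
      rw [Fin.val_zero, zero_mul, pow_zero, pow_mul, hζ.pow_eq_one, one_pow]

theorem invariantCoeff_D (m : ℕ) (f : MvPolynomial (Fin 4) ℂ) : invariantCoeff ζ m (D f) = 0 := by
  change coeff _ (diagonalize ζ (D f)) = 0
  rw [diagonalize_D hζ, coeff_diagonalD]
  exact mul_eq_zero_of_left ((add_mul_add_sq_mul_eq_zero_iff hζ).2 ⟨rfl, rfl⟩) _

theorem diagonalize_eq_monomial (hf : IsWeightedHomogeneous xDegree f (3 * m)) (hD : D f = 0) :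
    diagonalize ζ f =
      monomial (Finsupp.equivFunOnFinite.symm fun _ => m) (invariantCoeff ζ m f) := by
  ext s
  rw [coeff_monomial]
  split_ifs with hs
  · rw [← hs]
    rfl
  by_contra hcoeff
  have degree_eq : s 0 + s 1 + s 2 = 3 * m := by
    simpa [Finsupp.weight_eq_sum, Fin.sum_univ_three] using
      isWeightedHomogeneous_diagonalize (ζ := ζ) hf hcoeff
  have eigenvalue_mul := coeff_diagonalD (ζ := ζ) s (diagonalize ζ f)
  rw [← diagonalize_D hζ, hD, map_zero, coeff_zero, eq_comm, mul_eq_zero_iff_right hcoeff,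
    add_mul_add_sq_mul_eq_zero_iff hζ] at eigenvalue_mul
  refine hs (Finsupp.ext fun i => ?_)
  fin_cases i
  exacts [show m = s 0 by lia, show m = s 1 by lia, show m = s 2 by lia]

theorem exists_sum_pow_mul_eq (p : Fin 3 → ℂ) :
    ∃ q : Fin 3 → ℂ, ∀ i : Fin 3, ∑ j : Fin 3, ζ ^ (i * j : ℕ) * q j = p i := by
  have hinj : Function.Injective fun i : Fin 3 => ζ ^ (i : ℕ) :=
    fun i j hij => Fin.ext (hζ.pow_inj i.2 j.2 hij)
  have hdet : IsUnit (Matrix.vandermonde fun i : Fin 3 => ζ ^ (i : ℕ)) :=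
    (Matrix.isUnit_iff_isUnit_det _).2 (Matrix.det_vandermonde_ne_zero_iff.2 hinj).isUnit
  obtain ⟨q, hq⟩ := Matrix.mulVec_surjective_iff_isUnit.2 hdet p
  refine ⟨q, fun i => ?_⟩
  simp only [← hq, Matrix.mulVec, dotProduct, Matrix.vandermonde_apply, pow_mul]

theorem eq_zero_of_diagonalize_eq_zero (hf : IsWeightedHomogeneous cyclicWeight f v)
    (h : diagonalize ζ f = 0) : f = 0 := by
  refine eq_zero_of_eval_eq_zero_of_apply_eq_one hf (i := 0) three_ne_zero fun p hp => ?_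
  obtain ⟨q, hq⟩ := exists_sum_pow_mul_eq hζ (Fin.tail p)
  have hpq : p = Fin.cons 1 fun i : Fin 3 => ∑ j : Fin 3, ζ ^ (i * j : ℕ) * q j := by
    rw [_root_.funext hq, ← hp, Fin.cons_self_tail]
  rw [hpq, ← eval_diagonalize, h, map_zero]

theorem eq_zero_of_invariantCoeff_eq_zero (hf : IsWeightedHomogeneous xDegree f (3 * m))
    (hfv : IsWeightedHomogeneous cyclicWeight f v) (hD : D f = 0)
    (h : invariantCoeff ζ m f = 0) : f = 0 :=
  eq_zero_of_diagonalize_eq_zero hζ hfv (by rw [diagonalize_eq_monomial hζ hf hD, h, map_zero])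

theorem eval_eq_invariantCoeff (hf : IsWeightedHomogeneous xDegree f (3 * m)) (hD : D f = 0) :
    eval ![1, 0, 0, 3] f = invariantCoeff ζ m f := by
  have hsum := one_add_add_sq_eq_zero hζ
  have fourier : (![1, 0, 0, 3] : Fin 4 → ℂ) =
      Fin.cons 1 fun i : Fin 3 => ∑ j : Fin 3, ζ ^ (i * j : ℕ) * ![1, ζ, ζ ^ 2] j := by
    refine congrArg (Fin.cons 1) (_root_.funext fun i => ?_)
    rw [Fin.sum_univ_three]
    fin_cases i
    · change 0 = ζ ^ 0 * 1 + ζ ^ 0 * ζ + ζ ^ 0 * ζ ^ 2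
      linear_combination -hsum
    · change 0 = ζ ^ 0 * 1 + ζ ^ 1 * ζ + ζ ^ 2 * ζ ^ 2
      linear_combination -(1 - ζ + ζ ^ 2) * hsum
    · change 3 = ζ ^ 0 * 1 + ζ ^ 2 * ζ + ζ ^ 4 * ζ ^ 2
      linear_combination -(2 + ζ ^ 3) * hζ.pow_eq_one
  have pow_eq_one : ζ ^ m * (ζ ^ 2) ^ m = 1 := by
    rw [← mul_pow, ← pow_succ', hζ.pow_eq_one, one_pow]
  rw [fourier, ← eval_diagonalize, diagonalize_eq_monomial hζ hf hD, eval_monomial,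
    Finsupp.prod_fintype _ _ (by simp), Fin.prod_univ_three]
  simp [pow_eq_one]

end Diagonalization

section NormForm

/-- The norm of `x₂ + t x₁ + t² x₀` over `ℂ[z]`, where `t³ = z`; with `z` inverted it generates the
constants of `D`. -/
noncomputable def normForm : MvPolynomial (Fin 4) ℂ :=
  X 0 ^ 2 * X 1 ^ 3 + X 0 * X 2 ^ 3 + X 3 ^ 3 - 3 • (X 0 * X 1 * X 2 * X 3)

/-- The correction term measuring how far `normForm` is from being an eigenvector of `E`. -/
noncomputable def normFormPrimitive : MvPolynomial (Fin 4) ℂ :=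
  X 0 * X 1 ^ 2 * X 3 - X 2 * X 3 ^ 2

theorem D_normForm : D normForm = 0 := by
  rw [normForm, map_sub, map_nsmul]
  simp only [map_add, Derivation.leibniz, Derivation.leibniz_pow, D_X_zero, D_X_one, D_X_two,
    D_X_three, smul_eq_mul, nsmul_eq_mul]
  push_cast
  ring

theorem E_normForm : E normForm = normForm + D normFormPrimitive := by
  have hE₁ := E_X_of_ne (i := 1) (by decide)
  have hE₂ := E_X_of_ne (i := 2) (by decide)
  have hE₃ := E_X_of_ne (i := 3) (by decide)
  rw [normForm, map_sub, map_nsmul]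
  simp only [normFormPrimitive, map_add, map_sub, Derivation.leibniz, Derivation.leibniz_pow,
    D_X_zero, D_X_one, D_X_two, D_X_three, E_X_zero, hE₁, hE₂, hE₃, smul_eq_mul, nsmul_eq_mul]
  push_cast
  ring

theorem isWeightedHomogeneous_normForm {w : Fin 4 → ℕ} {e : ℕ} (h₁ : w 2 = w 1 + e)
    (h₂ : w 3 = w 2 + e) (h₃ : w 0 + w 1 = w 3 + e) :
    IsWeightedHomogeneous w normForm (3 * w 3) := by
  have hX (i : Fin 4) : IsWeightedHomogeneous w (X i : MvPolynomial (Fin 4) ℂ) (w i) :=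
    isWeightedHomogeneous_X ..
  refine Submodule.sub_mem (weightedHomogeneousSubmodule ℂ w _)
    (add_mem (add_mem ?_ ?_) ?_) (nsmul_mem ?_ 3)
  · exact (show 2 • w 0 + 3 • w 1 = 3 * w 3 by lia) ▸ ((hX 0).pow 2).mul ((hX 1).pow 3)
  · exact (show w 0 + 3 • w 2 = 3 * w 3 by lia) ▸ (hX 0).mul ((hX 2).pow 3)
  · exact (hX 3).pow 3
  · exact (show w 0 + w 1 + w 2 + w 3 = 3 * w 3 by lia) ▸
      (((hX 0).mul (hX 1)).mul (hX 2)).mul (hX 3)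

theorem isWeightedHomogeneous_X_zero_pow_mul_normForm_pow {w : Fin 4 → ℕ} {e : ℕ}
    (h₁ : w 2 = w 1 + e) (h₂ : w 3 = w 2 + e) (h₃ : w 0 + w 1 = w 3 + e) (j m : ℕ) :
    IsWeightedHomogeneous w (X 0 ^ j * normForm ^ m) (j • w 0 + m • (3 * w 3)) :=
  ((isWeightedHomogeneous_X ..).pow j).mul ((isWeightedHomogeneous_normForm h₁ h₂ h₃).pow m)

theorem D_X_zero_pow_mul_normForm_pow (j m : ℕ) : D (X 0 ^ j * normForm ^ m) = 0 := by
  simp [Derivation.leibniz, Derivation.leibniz_pow, D_normForm, D_X_zero]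

theorem E_X_zero_pow (j : ℕ) : E (X 0 ^ j) = j • (X 0 ^ j : MvPolynomial (Fin 4) ℂ) := by
  induction j with
  | zero => simp
  | succ j ih =>
    rw [pow_succ, Derivation.leibniz, ih, E_X_zero]
    simp only [smul_eq_mul, nsmul_eq_mul]
    push_cast
    ring

theorem E_X_zero_pow_mul_normForm_pow_succ (j m : ℕ) :
    E (X 0 ^ j * normForm ^ (m + 1)) = (j + m + 1) • (X 0 ^ j * normForm ^ (m + 1)) +
      D ((m + 1) • (X 0 ^ j * normForm ^ m * normFormPrimitive)) := by
  have D_mul : D (X 0 ^ j * normForm ^ m * normFormPrimitive) =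
      X 0 ^ j * normForm ^ m * D normFormPrimitive := by
    rw [Derivation.leibniz, D_X_zero_pow_mul_normForm_pow, smul_zero, add_zero, smul_eq_mul]
  rw [map_nsmul, D_mul, Derivation.leibniz, Derivation.leibniz_pow, E_X_zero_pow, E_normForm,
    Nat.add_sub_cancel]
  simp only [smul_eq_mul, nsmul_eq_mul]
  push_cast
  ring

theorem normForm_ne_zero : normForm ≠ 0 := by
  intro h
  simpa [normForm] using congrArg (eval ![1, 0, 0, 1]) h

end NormForm

section Constants

variable {m v : ℕ} {f : MvPolynomial (Fin 4) ℂ}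

theorem exists_isPrimitiveRoot_three : ∃ ζ : ℂ, IsPrimitiveRoot ζ 3 :=
  ⟨_, Complex.isPrimitiveRoot_exp 3 three_ne_zero⟩

theorem exists_weight_eq_of_D_eq_zero (hf : IsWeightedHomogeneous xDegree f (3 * m))
    (hfv : IsWeightedHomogeneous cyclicWeight f v) (hD : D f = 0) (hf0 : f ≠ 0) :
    ∃ j, v = 3 * j + 6 * m := by
  obtain ⟨ζ, hζ⟩ := exists_isPrimitiveRoot_three
  have eval_ne_zero : eval ![1, 0, 0, 3] f ≠ 0 := by
    rw [eval_eq_invariantCoeff hζ hf hD]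
    exact fun h => hf0 (eq_zero_of_invariantCoeff_eq_zero hζ hf hfv hD h)
  -- At this point only monomials of the form `z ^ j * x₂ ^ (3 * m)` contribute.
  rw [eval_eq'] at eval_ne_zero
  obtain ⟨s, hs, hterm⟩ := Finset.exists_ne_zero_of_sum_ne_zero eval_ne_zero
  have degree_eq := hf (mem_support_iff.1 hs)
  have weight_eq := hfv (mem_support_iff.1 hs)
  rw [weight_xDegree] at degree_eq
  rw [weight_cyclicWeight] at weight_eq
  have hs₁₂ : s 1 = 0 ∧ s 2 = 0 := by
    simpa [Fin.prod_univ_four, mem_support_iff.1 hs] using hterm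
  exact ⟨s 0, by lia⟩

theorem exists_eq_smul_X_zero_pow_mul_normForm_pow
    (hf : IsWeightedHomogeneous xDegree f (3 * m)) (hfv : IsWeightedHomogeneous cyclicWeight f v)
    (hD : D f = 0) : ∃ (c : ℂ) (j : ℕ), f = c • (X 0 ^ j * normForm ^ m) := by
  obtain rfl | hf0 := eq_or_ne f 0
  · exact ⟨0, 0, (zero_smul _ _).symm⟩
  obtain ⟨j, rfl⟩ := exists_weight_eq_of_D_eq_zero hf hfv hD hf0
  obtain ⟨ζ, hζ⟩ := exists_isPrimitiveRoot_three
  set q : MvPolynomial (Fin 4) ℂ := X 0 ^ j * normForm ^ m with hq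
  have hqD : D q = 0 := D_X_zero_pow_mul_normForm_pow j m
  have hqx : IsWeightedHomogeneous xDegree q (3 * m) := by
    simpa [hq, xDegree, mul_comm] using isWeightedHomogeneous_X_zero_pow_mul_normForm_pow
      (w := xDegree) (e := 0) rfl rfl rfl j m
  have hqv : IsWeightedHomogeneous cyclicWeight q (3 * j + 6 * m) := by
    simpa [hq, cyclicWeight, mul_comm] using isWeightedHomogeneous_X_zero_pow_mul_normForm_pow
      (w := cyclicWeight) (e := 1) rfl rfl rfl j m
  have hq0 : q ≠ 0 := mul_ne_zero (pow_ne_zero _ (X_ne_zero 0)) (pow_ne_zero _ normForm_ne_zero)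
  have coeff_ne_zero : invariantCoeff ζ m q ≠ 0 :=
    fun h => hq0 (eq_zero_of_invariantCoeff_eq_zero hζ hqx hqv hqD h)
  refine ⟨invariantCoeff ζ m f / invariantCoeff ζ m q, j, sub_eq_zero.1 ?_⟩
  refine eq_zero_of_invariantCoeff_eq_zero hζ
    ((weightedHomogeneousSubmodule ℂ xDegree _).sub_mem hf (Submodule.smul_mem _ _ hqx))
    ((weightedHomogeneousSubmodule ℂ cyclicWeight _).sub_mem hfv (Submodule.smul_mem _ _ hqv)) ?_ ?_
  · rw [map_sub, Derivation.map_smul, hD, hqD, smul_zero, sub_zero]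
  · rw [map_sub, map_smul, smul_eq_mul, div_mul_cancel₀ _ coeff_ne_zero, sub_self]

theorem eq_zero_of_E_eq_D (hm : m ≠ 0) (hf : IsWeightedHomogeneous xDegree f (3 * m))
    (hfv : IsWeightedHomogeneous cyclicWeight f v) (hD : D f = 0) {g : MvPolynomial (Fin 4) ℂ}
    (hED : E f = D g) : f = 0 := by
  obtain ⟨c, j, rfl⟩ := exists_eq_smul_X_zero_pow_mul_normForm_pow hf hfv hD
  obtain ⟨m, rfl⟩ := Nat.exists_eq_succ_of_ne_zero hm
  obtain ⟨ζ, hζ⟩ := exists_isPrimitiveRoot_three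
  refine eq_zero_of_invariantCoeff_eq_zero hζ hf hfv hD ?_
  have := congrArg (invariantCoeff ζ (m + 1)) hED
  rw [Derivation.map_smul, E_X_zero_pow_mul_normForm_pow_succ, smul_add, map_add, smul_comm,
    map_nsmul, ← Derivation.map_smul, invariantCoeff_D hζ, invariantCoeff_D hζ, add_zero,
    smul_eq_zero] at this
  exact this.resolve_left (by lia)

theorem eq_zero_of_D_eq_zero (hv : ¬ 3 ∣ v) (hf : IsWeightedHomogeneous xDegree f (3 * m))
    (hfv : IsWeightedHomogeneous cyclicWeight f v) (hD : D f = 0) : f = 0 := by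
  by_contra hf0
  obtain ⟨j, rfl⟩ := exists_weight_eq_of_D_eq_zero hf hfv hD hf0
  exact hv ⟨j + 2 * m, by ring⟩

end Constants

section Counting

/-- When the weight is `1` modulo `3` and the degree is `3 (n + 1)`, the exponents of `x₂, x₁, x₀`
are congruent to `r, r + 1, r + 2` modulo `3` for some `r`. This map records `r` and the three
quotients by `3`, which sum to `n`. -/
noncomputable def residueAndQuotients (s : Fin 4 →₀ ℕ) : ℕ × (Fin 3 →₀ ℕ) :=
  (s 3 % 3, Finsupp.equivFunOnFinite.symm ![s 1 / 3, s 2 / 3, s 3 / 3])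

theorem mem_range_product_finsuppAntidiag {n : ℕ} {x : ℕ × (Fin 3 →₀ ℕ)} :
    x ∈ (Finset.range 3 ×ˢ Finset.finsuppAntidiag Finset.univ n : Finset (ℕ × (Fin 3 →₀ ℕ))) ↔
      x.1 < 3 ∧ x.2 0 + x.2 1 + x.2 2 = n := by
  simp [Fin.sum_univ_three]

theorem bijOn_residueAndQuotients {n q : ℕ} (hq : 2 * (n + 1) ≤ q) :
    Set.BijOn residueAndQuotients
      {s | Finsupp.weight xDegree s = 3 * (n + 1) ∧ Finsupp.weight cyclicWeight s = 3 * q + 1}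
      (Finset.range 3 ×ˢ Finset.finsuppAntidiag Finset.univ n : Finset (ℕ × (Fin 3 →₀ ℕ))) := by
  simp only [weight_xDegree, weight_cyclicWeight]
  refine ⟨fun s ⟨hdeg, hwt⟩ => ?_, fun s ⟨hdeg, hwt⟩ t ⟨hdeg', hwt'⟩ hst => ?_, fun x hx => ?_⟩
  · exact mem_range_product_finsuppAntidiag.2
      ⟨Nat.mod_lt _ three_pos, show s 1 / 3 + s 2 / 3 + s 3 / 3 = n by lia⟩
  · have hres : s 3 % 3 = t 3 % 3 := congrArg Prod.fst hst
    have hquot (i : Fin 3) := DFunLike.congr_fun (congrArg Prod.snd hst) i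
    have h₁ : s 1 / 3 = t 1 / 3 := hquot 0
    have h₂ : s 2 / 3 = t 2 / 3 := hquot 1
    have h₃ : s 3 / 3 = t 3 / 3 := hquot 2
    refine Finsupp.ext fun i => ?_
    fin_cases i
    exacts [show s 0 = t 0 by lia, show s 1 = t 1 by lia, show s 2 = t 2 by lia,
      show s 3 = t 3 by lia]
  · obtain ⟨r, t⟩ := x
    obtain ⟨hr, ht⟩ : r < 3 ∧ t 0 + t 1 + t 2 = n := mem_range_product_finsuppAntidiag.1 hx
    set a := 3 * t 0 + (r + 2) % 3
    set b := 3 * t 1 + (r + 1) % 3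
    set c := 3 * t 2 + r
    set d := (3 * q + 1 - b - 2 * c) / 3
    refine ⟨Finsupp.equivFunOnFinite.symm ![d, a, b, c],
      ⟨show a + b + c = 3 * (n + 1) by lia, show 3 * d + b + 2 * c = 3 * q + 1 by lia⟩,
      Prod.ext (show c % 3 = r by lia) (Finsupp.ext fun i => ?_)⟩
    fin_cases i
    exacts [show a / 3 = t 0 by lia, show b / 3 = t 1 by lia, show c / 3 = t 2 by lia]

theorem ncard_setOf_weight_eq {n q : ℕ} (hq : 2 * (n + 1) ≤ q) :
    {s : Fin 4 →₀ ℕ | Finsupp.weight xDegree s = 3 * (n + 1) ∧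
      Finsupp.weight cyclicWeight s = 3 * q + 1}.ncard =
        3 * (n + 1) * (3 * (n + 1) + 3) / 6 := by
  rw [(bijOn_residueAndQuotients hq).ncard_eq, Set.ncard_coe_finset, Finset.card_product,
    Finset.card_range, Finset.card_finsuppAntidiag_nat_eq_choose, Finset.card_univ,
    Fintype.card_fin, show 3 + n - 1 = n + 2 by lia, Nat.choose_symm_add, Nat.choose_two_right,
    show n + 2 - 1 = n + 1 by lia,
    show 3 * (n + 1) * (3 * (n + 1) + 3) = 9 * ((n + 2) * (n + 1)) by ring]
  obtain ⟨c, hc⟩ : 2 ∣ (n + 2) * (n + 1) := mul_comm (n + 1) (n + 2) ▸ Nat.two_dvd_mul_add_one _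
  lia

end Counting

section Filtration

/-- The filtration of `kloostermanPk₃ k` by the weight `cyclicWeight`. -/
noncomputable abbrev filtration (k n : ℕ) : Submodule ℂ (kloostermanPk₃ k) :=
  (weightLT ℂ cyclicWeight n).submoduleOf (kloostermanPk₃ k)

theorem xDegree_add_cyclicWeight_ne_zero (i : Fin 4) : cyclicWeight i + xDegree i ≠ 0 := by
  fin_cases i <;> decide

variable {k n : ℕ} {f : MvPolynomial (Fin 4) ℂ}

theorem mem_weightLT_of_theta_mem (hk : k ≠ 0) (h3 : 3 ∣ k) (hf : f ∈ kloostermanPk₃ k)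
    (hθ : kloostermanTheta₃ f ∈ weightLT ℂ cyclicWeight n) : f ∈ weightLT ℂ cyclicWeight n := by
  obtain ⟨m, rfl⟩ := h3
  rw [theta_eq] at hθ
  exact mem_weightLT_of_add_apply_mem (raisesWeight_E _) (raisesWeight_D rfl rfl rfl)
    (fun f hf v => isWeightedHomogeneous_weightedHomogeneousComponent hf v)
    (fun v f hf hfv hD g hED => eq_zero_of_E_eq_D (by lia) hf hfv hD hED) hf hθ

theorem theta_mem_weightLT_succ_iff (hk : k ≠ 0) (h3 : 3 ∣ k) (hn : ¬ 3 ∣ n)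
    (hf : f ∈ kloostermanPk₃ k) :
    kloostermanTheta₃ f ∈ weightLT ℂ cyclicWeight (n + 1) ↔ f ∈ weightLT ℂ cyclicWeight n := by
  have hE := raisesWeight_E cyclicWeight
  have hD : RaisesWeight cyclicWeight 1 D.toLinearMap := raisesWeight_D rfl rfl rfl
  refine ⟨fun hθ => ?_, fun hfn => theta_eq ▸ add_apply_mem_weightLT_succ hE hD hfn⟩
  have hfn := mem_weightLT_of_theta_mem hk h3 hf hθ
  obtain ⟨m, rfl⟩ := h3
  rw [theta_eq] at hθ
  exact mem_weightLT_of_mem_succ hfn <| eq_zero_of_D_eq_zero hn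
    (isWeightedHomogeneous_weightedHomogeneousComponent hf n)
    (weightedHomogeneousComponent_isWeightedHomogeneous n f)
    (apply_component_eq_zero_of_mem_weightLT_succ hE hD hfn hθ)

theorem injOn_theta (hk : k ≠ 0) (h3 : 3 ∣ k) :
    Set.InjOn kloostermanTheta₃ (kloostermanPk₃ k) := by
  intro f hf g hg hfg
  have hθ : kloostermanTheta₃ (f - g) ∈ weightLT ℂ cyclicWeight 0 := by
    rw [map_sub, hfg, sub_self]
    exact zero_mem _
  have hsub := mem_weightLT_of_theta_mem hk h3 (sub_mem hf hg) hθ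
  rw [weightLT_zero, Submodule.mem_bot] at hsub
  exact sub_eq_zero.1 hsub

theorem thetaOn_injective (hk : k ≠ 0) (h3 : 3 ∣ k) : Function.Injective (thetaOn k) :=
  fun f g hfg => Subtype.ext (injOn_theta hk h3 f.2 g.2 (congrArg Subtype.val hfg))

theorem comap_thetaOn_filtration_succ (hk : k ≠ 0) (h3 : 3 ∣ k) (hn : ¬ 3 ∣ n) :
    (filtration k (n + 1)).comap (thetaOn k) = filtration k n :=
  Submodule.ext fun f => theta_mem_weightLT_succ_iff hk h3 hn f.2

theorem finrank_filtration_succ (hk : k ≠ 0) (h3 : 3 ∣ k) {q : ℕ} (hq : k ≤ q) :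
    Module.finrank ℂ (filtration k (3 * q + 1 + 1)) =
      Module.finrank ℂ (filtration k (3 * q + 1)) + k * (k + 3) / 6 := by
  obtain ⟨m, rfl⟩ := h3
  obtain ⟨m, rfl⟩ := Nat.exists_eq_succ_of_ne_zero (show m ≠ 0 by lia)
  rw [← ncard_setOf_weight_eq (show 2 * (m + 1) ≤ q by lia)]
  exact finrank_weightLT_submoduleOf_succ xDegree_add_cyclicWeight_ne_zero _ _

theorem finrank_quotient_range_thetaOn (hk : k ≠ 0) (h3 : 3 ∣ k) :
    FiniteDimensional ℂ (kloostermanPk₃ k ⧸ LinearMap.range (thetaOn k)) ∧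
      Module.finrank ℂ (kloostermanPk₃ k ⧸ LinearMap.range (thetaOn k)) = k * (k + 3) / 6 := by
  have (n : ℕ) : FiniteDimensional ℂ (filtration k n) :=
    finite_weightLT_submoduleOf xDegree_add_cyclicWeight_ne_zero k n
  refine finrank_quotient_range_of_filtration (thetaOn_injective hk h3) (F := filtration k)
    (fun m n hmn => Submodule.comap_mono (weightLT_mono _ hmn))
    (fun f => exists_mem_weightLT _ f.1)
    (Filter.frequently_atTop.2 fun a => ⟨3 * (a + k) + 1, by lia, ?_, ?_⟩)
  · exact comap_thetaOn_filtration_succ hk h3 (by lia)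
  · exact finrank_filtration_succ hk h3 (by lia)

end Filtration

end Kloosterman

/-- Let `k ≥ 1` be divisible by `3`, and take `n = 2`.  Then
`θ = z∂_z + D` is injective on `P_k`, maps `P_k` into `P_k`, and its cokernel on `P_k` is
a finite-dimensional `ℂ`-vector space of dimension `k(k+3)/6`. -/
theorem kloosterman_deRham_dimension_n_two (k : ℕ) (hk : 1 ≤ k) (h3 : 3 ∣ k) :
    Set.InjOn (kloostermanTheta₃) (kloostermanPk₃ k) ∧
    Submodule.map kloostermanTheta₃ (kloostermanPk₃ k) ≤ kloostermanPk₃ k ∧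
    FiniteDimensional ℂ
      (↥(kloostermanPk₃ k) ⧸
        Submodule.comap (kloostermanPk₃ k).subtype
          (Submodule.map kloostermanTheta₃ (kloostermanPk₃ k))) ∧
    Module.finrank ℂ
      (↥(kloostermanPk₃ k) ⧸
        Submodule.comap (kloostermanPk₃ k).subtype
          (Submodule.map kloostermanTheta₃ (kloostermanPk₃ k))) = k * (k + 3) / 6 := by
  have hk0 : k ≠ 0 := Nat.one_le_iff_ne_zero.1 hk
  rw [← Kloosterman.range_thetaOn]
  exact ⟨Kloosterman.injOn_theta hk0 h3,
    Submodule.map_le_iff_le_comap.2 fun _ => Kloosterman.theta_mem,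
    Kloosterman.finrank_quotient_range_thetaOn hk0 h3⟩
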